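/- arXiv:2005.02604 — 8 statements merged into one kernel-verified Lean document; each statement's English description precedes it below -/
import Mathlib

section
/- Let h be a symmetric bilinear form on V with associated symmetric endomorphism H, and let T be a (0,k)-tensor on V. Then for all X_1,…,X_k ∈ V: Ric_{h⧆g}(T)(X_1,…,X_k) = 2·Σ_{i≠j} (T∘τ_{ij})(X_1,…,H(X_i),…,X_k) − Σ_{i≠j} g(X_i,X_j)·c_{ij}(h⊗T)(X_1,…,X̂_i,…,X̂_j,…,X_k) − Σ_{i≠j} h(X_i,X_j)·c_{ij}(g⊗T)(X_1,…,X̂_i,…,X̂_j,…,X_k) − (n−2)·(HT)(X_1,…,X_k) + k·tr(h)·T(X_1,…,X_k), where in (T∘τ_{ij}) the argument H(X_i) occupies the i-th slot (and the l-th slot holds X_l for l ≠ i), sums over i≠j run over ordered pairs 1 ≤ i,j ≤ k, and hats denote omitted arguments. -/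
/-!
If `S₁`, `S₂` are the symmetric endomorphisms of `s₁`, `s₂`, the curvature operator of `s₁ ⧆ s₂` is
`R(X, Y) = S₁ X ∧ S₂ Y + S₂ X ∧ S₁ Y`, so that its curvature term is the sum of two terms of the
form `∑ᵢ ∑ⱼ ((A Xᵢ ∧ B eⱼ) T)(X₁, …, eⱼ, …, X_k)`. Up to the minus sign in the action on tensors:
when `A Xᵢ ∧ B eⱼ` hits the slot of `eⱼ`, the sum over `j` is a Ricci contraction and leaves
`B A Xᵢ - tr(B) A Xᵢ` in slot `i`; when it hits a slot `m ≠ i`, expanding in the basis gives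
`g(A Xᵢ, X_m)` times the contraction of `b ⊗ T` in the slots `i`, `m`, where `b` is the form of `B`,
minus `T` with `B X_m` in slot `i` and `A Xᵢ` in slot `m`. Interchanging `i` and `m` interchanges
the roles of `A` and `B` in the latter, so the two transposed terms agree, whence the factor `2`.
For `s₂ = g` the endomorphism `S₂` is the identity, of trace `n`.
-/

open scoped RealInnerProductSpace BigOperators
open Finset

noncomputable section

variable {V : Type*} [NormedAddCommGroup V] [InnerProductSpace ℝ V]

/-- The action `(L T)(X₁,…,X_k) = −Σᵢ T(X₁,…,L(Xᵢ),…,X_k)` of a map `L : V → V`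
on a `(0,k)`-tensor `T`. -/
def tact {k : ℕ} (L : V → V) (T : (Fin k → V) → ℝ) (X : Fin k → V) : ℝ :=
  -∑ i, T (Function.update X i (L (X i)))

/-- The Kulkarni–Nomizu product of two bilinear forms. -/
def knProd (s₁ s₂ : V → V → ℝ) (X Y Z W : V) : ℝ :=
  s₁ X Z * s₂ Y W - s₁ X W * s₂ Y Z + s₁ Y W * s₂ X Z - s₁ Y Z * s₂ X W

/-- The inner product `g` as a bilinear form. -/
def gf (X Y : V) : ℝ := ⟪X, Y⟫

/-- The curvature endomorphism `R(X,Y)`, determined by `g(R(X,Y)Z,W) = R(X,Y,Z,W)`,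
expressed via the orthonormal basis `e`. -/
def curvOp {n : ℕ} (e : Fin n → V) (R : V → V → V → V → ℝ) (X Y Z : V) : V :=
  ∑ a, R X Y Z (e a) • e a

/-- The curvature term `Ric_R(T)(X₁,…,X_k) = Σᵢ Σⱼ ((R(Xᵢ,eⱼ))T)(X₁,…,eⱼ,…,X_k)`. -/
def ricTerm {n k : ℕ} (e : Fin n → V) (R : V → V → V → V → ℝ)
    (T : (Fin k → V) → ℝ) (X : Fin k → V) : ℝ :=
  ∑ i : Fin k, ∑ j : Fin n, tact (curvOp e R (X i) (e j)) T (Function.update X i (e j))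

/-- The inner product of two `(0,k)`-tensors with respect to the orthonormal basis `e`. -/
def tinner {n k : ℕ} (e : Fin n → V) (S T : (Fin k → V) → ℝ) : ℝ :=
  ∑ I : Fin k → Fin n, S (fun m => e (I m)) * T (fun m => e (I m))

/-- The skew endomorphism `(A ∧ B)Z = g(A,Z)B − g(B,Z)A`. -/
def wedgeOp (A B Z : V) : V := ⟪A, Z⟫ • B - ⟪B, Z⟫ • A

theorem sum_inner_smul_map {𝕜 ι E F : Type*} [RCLike 𝕜] [Fintype ι] [NormedAddCommGroup E]
    [InnerProductSpace 𝕜 E] [AddCommMonoid F] [Module 𝕜 F] (e : OrthonormalBasis ι 𝕜 E)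
    (L : E →ₗ[𝕜] F) (v : E) : ∑ j, inner 𝕜 (e j) v • L (e j) = L v := by
  simp only [← map_smul, ← map_sum, e.sum_repr']

theorem sum_eq_add_sum_ite_ne {ι M : Type*} [Fintype ι] [DecidableEq ι] [AddCommMonoid M]
    (f : ι → M) (i : ι) : ∑ j, f j = f i + ∑ j, if i = j then 0 else f j := by
  rw [← add_sum_erase univ f (mem_univ i), ← filter_ne univ i, sum_filter]
  simp only [ne_eq, ite_not]

theorem sum_update_update_swap {ι α M : Type*} [Fintype ι] [DecidableEq ι] [AddCommMonoid M]
    (f : (ι → α) → M) (x u v : ι → α) :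
    (∑ i, ∑ j, if i = j then 0 else f (Function.update (Function.update x i (u j)) j (v i))) =
      ∑ i, ∑ j, if i = j then 0 else f (Function.update (Function.update x i (v j)) j (u i)) := by
  rw [sum_comm]
  refine sum_congr rfl fun i _ => sum_congr rfl fun j _ => ?_
  simp only [eq_comm (a := j)]
  split_ifs with hij
  · rfl
  · rw [Function.update_comm (Ne.symm hij)]

theorem tact_id {α : Type*} {k : ℕ} (T : (Fin k → α) → ℝ) (X : Fin k → α) :
    tact id T X = -(k * T X) := by
  simp [tact]

theorem inner_wedgeOp (A B Z W : V) :
    ⟪wedgeOp A B Z, W⟫ = ⟪A, Z⟫ * ⟪B, W⟫ - ⟪B, Z⟫ * ⟪A, W⟫ := by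
  simp only [wedgeOp, inner_sub_left, real_inner_smul_left]

theorem curvOp_eq_of_inner {n : ℕ} (e : OrthonormalBasis (Fin n) ℝ V) {R : V → V → V → V → ℝ}
    {X Y Z v : V} (hv : ∀ W, ⟪v, W⟫ = R X Y Z W) : curvOp e R X Y Z = v := by
  simp only [curvOp, ← hv, real_inner_comm (e _) v, e.sum_repr']

theorem curvOp_knProd {n : ℕ} (e : OrthonormalBasis (Fin n) ℝ V) {S₁ S₂ : V → V}
    {s₁ s₂ : V → V → ℝ} (hs₁ : ∀ X Y, s₁ X Y = ⟪S₁ X, Y⟫) (hs₂ : ∀ X Y, s₂ X Y = ⟪S₂ X, Y⟫)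
    (X Y Z : V) :
    curvOp e (knProd s₁ s₂) X Y Z = wedgeOp (S₁ X) (S₂ Y) Z + wedgeOp (S₂ X) (S₁ Y) Z := by
  refine curvOp_eq_of_inner e fun W => ?_
  simp only [inner_add_left, inner_wedgeOp, knProd, hs₁, hs₂]
  ring

theorem sum_wedgeOp_apply_self {ι : Type*} [Fintype ι] (e : OrthonormalBasis ι ℝ V)
    (B : V →ₗ[ℝ] V) (v : V) :
    ∑ j, wedgeOp v (B (e j)) (e j) = B v - (∑ j, ⟪B (e j), e j⟫) • v := by
  simp only [wedgeOp, sum_sub_distrib, ← sum_smul, real_inner_comm (e _) v,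
    sum_inner_smul_map e B v]

section Tensor

variable {n k : ℕ} (e : OrthonormalBasis (Fin n) ℝ V)
  (T : MultilinearMap ℝ (fun _ : Fin k => V) ℝ) (X : Fin k → V)

theorem tact_add (L L' : V → V) : tact (L + L') T X = tact L T X + tact L' T X := by
  simp only [tact, Pi.add_apply, T.map_update_add, sum_add_distrib, neg_add]

/-- The contraction `c_{ij}(s ⊗ T)`. It is evaluated at a full argument list `X`, whose
entries in the slots `i` and `j` are overwritten, instead of at the list with them omitted. -/
def contr {α : Type*} {n k : ℕ} (e : Fin n → α) (s : α → α → ℝ) (T : (Fin k → α) → ℝ)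
    (i j : Fin k) (X : Fin k → α) : ℝ :=
  ∑ a, ∑ b, s (e a) (e b) * T (Function.update (Function.update X i (e a)) j (e b))

theorem contr_eq_sum {B : V → V} {b : V → V → ℝ} (hb : ∀ X Y, b X Y = ⟪B X, Y⟫)
    (i j : Fin k) :
    contr e b T i j X =
      ∑ a, T (Function.update (Function.update X i (e a)) j (B (e a))) := by
  refine sum_congr rfl fun a _ => ?_
  simpa only [hb, real_inner_comm (e _) (B (e a)), smul_eq_mul, T.toLinearMap_apply] using
    sum_inner_smul_map e (T.toLinearMap (Function.update X i (e a)) j) (B (e a))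

theorem sum_map_update_wedgeOp_self (B : V →ₗ[ℝ] V) (v : V) (i : Fin k) :
    ∑ j, T (Function.update X i (wedgeOp v (B (e j)) (e j))) =
      T (Function.update X i (B v)) - (∑ j, ⟪B (e j), e j⟫) * T (Function.update X i v) := by
  rw [← T.map_update_sum, sum_wedgeOp_apply_self, T.map_update_sub, T.map_update_smul,
    smul_eq_mul]

theorem sum_map_update_wedgeOp_of_ne {B : V →ₗ[ℝ] V} (hB : B.IsSymmetric) {b : V → V → ℝ}
    (hb : ∀ X Y, b X Y = ⟪B X, Y⟫) {i m : Fin k} (him : i ≠ m) (v w : V) :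
    ∑ j, T (Function.update (Function.update X i (e j)) m (wedgeOp v (B (e j)) w)) =
      ⟪v, w⟫ * contr e b T i m X - T (Function.update (Function.update X i (B w)) m v) := by
  have expand_slot : ∑ j, ⟪B (e j), w⟫ * T (Function.update (Function.update X i (e j)) m v) =
      T (Function.update (Function.update X i (B w)) m v) := by
    simpa only [hB _ _, Function.update_comm him, smul_eq_mul, T.toLinearMap_apply] using
      sum_inner_smul_map e (T.toLinearMap (Function.update X m v) i) (B w)
  simp only [wedgeOp, T.map_update_sub, T.map_update_smul, smul_eq_mul, sum_sub_distrib,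
    ← mul_sum, expand_slot, contr_eq_sum e T X hb]

theorem sum_tact_wedgeOp_update {B : V →ₗ[ℝ] V} (hB : B.IsSymmetric) {b : V → V → ℝ}
    (hb : ∀ X Y, b X Y = ⟪B X, Y⟫) (i : Fin k) (v : V) :
    ∑ j, tact (wedgeOp v (B (e j))) T (Function.update X i (e j)) =
      (∑ m, if i = m then 0 else T (Function.update (Function.update X i (B (X m))) m v))
      - (∑ m, if i = m then 0 else ⟪v, X m⟫ * contr e b T i m X)
      - T (Function.update X i (B v))
      + (∑ j, b (e j) (e j)) * T (Function.update X i v) := by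
  have off_diag (m : Fin k) :
      (if i = m then 0 else
        ∑ j, T (Function.update (Function.update X i (e j)) m
          (wedgeOp v (B (e j)) (Function.update X i (e j) m)))) =
      (if i = m then 0 else ⟪v, X m⟫ * contr e b T i m X) -
        if i = m then 0 else T (Function.update (Function.update X i (B (X m))) m v) := by
    split_ifs with him
    · rw [sub_zero]
    · simp only [Function.update_of_ne (Ne.symm him),
        sum_map_update_wedgeOp_of_ne e T X hB hb him]
  simp only [tact, sum_neg_distrib]
  rw [sum_comm, sum_eq_add_sum_ite_ne _ i]
  simp only [off_diag, sum_sub_distrib, Function.update_self, Function.update_idem,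
    sum_map_update_wedgeOp_self, hb]
  ring

/-- The curvature term of the family of endomorphisms `(X, Y) ↦ A X ∧ B Y`, that is `ricTerm` with
`A X ∧ B Y` in place of the curvature operator `R(X, Y)`. The curvature term of a Kulkarni–Nomizu
product is a sum of two of these. -/
def wedgeRicTerm {n k : ℕ} (e : Fin n → V) (A B : V → V) (T : (Fin k → V) → ℝ)
    (X : Fin k → V) : ℝ :=
  ∑ i, ∑ j, tact (wedgeOp (A (X i)) (B (e j))) T (Function.update X i (e j))

theorem ricTerm_knProd_eq_add_wedgeRicTerm {S₁ S₂ : V → V} {s₁ s₂ : V → V → ℝ}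
    (hs₁ : ∀ X Y, s₁ X Y = ⟪S₁ X, Y⟫) (hs₂ : ∀ X Y, s₂ X Y = ⟪S₂ X, Y⟫) :
    ricTerm e (knProd s₁ s₂) T X = wedgeRicTerm e S₁ S₂ T X + wedgeRicTerm e S₂ S₁ T X := by
  have curvOp_eq (x y : V) :
      curvOp e (knProd s₁ s₂) x y = wedgeOp (S₁ x) (S₂ y) + wedgeOp (S₂ x) (S₁ y) :=
    funext (curvOp_knProd e hs₁ hs₂ x y)
  simp only [ricTerm, wedgeRicTerm, curvOp_eq, tact_add, sum_add_distrib]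

theorem wedgeRicTerm_eq {A : V → V} {B : V →ₗ[ℝ] V} (hB : B.IsSymmetric) {a b : V → V → ℝ}
    (ha : ∀ X Y, a X Y = ⟪A X, Y⟫) (hb : ∀ X Y, b X Y = ⟪B X, Y⟫) :
    wedgeRicTerm e A B T X =
      (∑ i, ∑ m, if i = m then 0 else
          T (Function.update (Function.update X i (B (X m))) m (A (X i))))
      - (∑ i, ∑ m, if i = m then 0 else a (X i) (X m) * contr e b T i m X)
      + tact (B ∘ A) T X - (∑ j, b (e j) (e j)) * tact A T X := by
  simp only [wedgeRicTerm, sum_tact_wedgeOp_update e T X hB hb, ← ha, sum_add_distrib,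
    sum_sub_distrib, ← mul_sum]
  simp only [tact, Function.comp_apply]
  ring

theorem stmt0_general {S₁ S₂ : V →ₗ[ℝ] V} (hS₁ : S₁.IsSymmetric) (hS₂ : S₂.IsSymmetric)
    {s₁ s₂ : V → V → ℝ} (hs₁ : ∀ X Y, s₁ X Y = ⟪S₁ X, Y⟫) (hs₂ : ∀ X Y, s₂ X Y = ⟪S₂ X, Y⟫) :
    ricTerm e (knProd s₁ s₂) T X =
      2 * (∑ i, ∑ j, if i = j then 0 else
          T (Function.update (Function.update X i (S₂ (X j))) j (S₁ (X i))))
      - (∑ i, ∑ j, if i = j then 0 else s₂ (X i) (X j) * contr e s₁ T i j X)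
      - (∑ i, ∑ j, if i = j then 0 else s₁ (X i) (X j) * contr e s₂ T i j X)
      + tact (S₁ ∘ S₂) T X + tact (S₂ ∘ S₁) T X
      - (∑ a, s₂ (e a) (e a)) * tact S₁ T X - (∑ a, s₁ (e a) (e a)) * tact S₂ T X := by
  rw [ricTerm_knProd_eq_add_wedgeRicTerm e T X hs₁ hs₂, wedgeRicTerm_eq e T X hS₂ hs₁ hs₂,
    wedgeRicTerm_eq e T X hS₁ hs₂ hs₁,
    sum_update_update_swap T X (fun j => S₁ (X j)) (fun i => S₂ (X i))]
  ring

end Tensor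

/-- Proposition `GeneralFormulaBochnerOnHWedgeG`: the curvature term of the
Lichnerowicz Laplacian for the curvature tensor `h ⧆ g`. -/
theorem stmt0 {n k : ℕ} (e : OrthonormalBasis (Fin n) ℝ V)
    (H : V →ₗ[ℝ] V) (hHsym : ∀ X Y : V, ⟪H X, Y⟫ = ⟪X, H Y⟫)
    (h : V → V → ℝ) (hh : ∀ X Y : V, h X Y = ⟪H X, Y⟫)
    (T : MultilinearMap ℝ (fun _ : Fin k => V) ℝ) :
    ∀ X : Fin k → V,
      ricTerm ⇑e (knProd h gf) ⇑T X =
        2 * (∑ i : Fin k, ∑ j : Fin k, if i = j then 0 else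
              T (Function.update (Function.update X i (X j)) j (H (X i))))
        - (∑ i : Fin k, ∑ j : Fin k, if i = j then 0 else
            ⟪X i, X j⟫ *
              ∑ a : Fin n, ∑ b : Fin n, h (e a) (e b) *
                T (Function.update (Function.update X i (e a)) j (e b)))
        - (∑ i : Fin k, ∑ j : Fin k, if i = j then 0 else
            h (X i) (X j) *
              ∑ a : Fin n, ∑ b : Fin n, ⟪e a, e b⟫ *
                T (Function.update (Function.update X i (e a)) j (e b)))
        - ((n : ℝ) - 2) * tact ⇑H ⇑T X
        + (k : ℝ) * (∑ a : Fin n, h (e a) (e a)) * T X := by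
  intro X
  have trace_gf : ∑ a, gf (e a) (e a) = n := by
    simp [gf]
  rw [stmt0_general e T X hHsym LinearMap.IsSymmetric.id hh (s₂ := gf) fun _ _ => rfl, trace_gf]
  simp only [LinearMap.id_coe, id_eq, Function.comp_id, Function.id_comp, tact_id, contr, gf]
  ring
end
end

section
/- Let h be a symmetric bilinear form on V with associated symmetric endomorphism H, and let T be a (0,k)-tensor on V. Then for all X_1,…,X_k ∈ V: Σ_{i=1}^k Σ_{a=1}^n ((H(X_i) ∧ e_a)T)(X_1,…,e_a,…,X_k) = Σ_{i≠j} (T∘τ_{ij})(X_1,…,H(X_i),…,X_k) − Σ_{i≠j} h(X_i,X_j)·c_{ij}(g⊗T)(X_1,…,X̂_i,…,X̂_j,…,X_k) − (n−1)·(HT)(X_1,…,X_k), where on the left e_a occupies the i-th slot, (A ∧ B) denotes the skew endomorphism (A ∧ B)Z = g(A,Z)B − g(B,Z)A, and in (T∘τ_{ij}) the argument H(X_i) occupies the i-th slot (and the l-th slot holds X_l for l ≠ i). -/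
/-!
Fix the slot `i` carrying `e_a` and write `A = H(Xᵢ)`; let `j` be the slot on which `A ∧ e_a` acts.
For `j = i` the operator meets `e_a` itself, and `∑ₐ (A ∧ e_a)e_a = (1 - n)A`. For `j ≠ i` it
produces `g(A, Xⱼ)e_a - g(e_a, Xⱼ)A`: summed over `a`, the first term contracts the slots `i` and
`j`, while the second puts `∑ₐ g(e_a, Xⱼ)e_a = Xⱼ` into slot `i` and `A` into slot `j`.
-/

open scoped RealInnerProductSpace BigOperators
open Finset

noncomputable section

variable {V : Type*} [NormedAddCommGroup V] [InnerProductSpace ℝ V]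

/-- The contraction `c_{ij}(g ⊗ T)` in the orthonormal family `e`. It is evaluated on a full tuple
`X`, whose entries in the slots `i ≠ j` are ignored, instead of on the tuple with these removed. -/
def metricContr {ι κ M : Type*} [Fintype ι] [DecidableEq κ] [AddCommMonoid M] [Module ℝ M]
    (e : ι → V) (T : (κ → V) → M) (i j : κ) (X : κ → V) : M :=
  ∑ a, ∑ b, ⟪e a, e b⟫ • T (Function.update (Function.update X i (e a)) j (e b))

theorem metricContr_eq_sum {ι κ M : Type*} [Fintype ι] [DecidableEq κ] [AddCommMonoid M]
    [Module ℝ M] {e : ι → V} (he : Orthonormal ℝ e) (T : (κ → V) → M) (i j : κ) (X : κ → V) :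
    metricContr e T i j X =
      ∑ a, T (Function.update (Function.update X i (e a)) j (e a)) := by
  classical
  simp only [metricContr, orthonormal_iff_ite.mp he, ite_smul, one_smul, zero_smul,
    Finset.sum_ite_eq, Finset.mem_univ, if_true]

theorem sum_inner_smul_map_update {𝕜 ι κ M : Type*} {E : κ → Type*} [RCLike 𝕜] [Fintype ι]
    [DecidableEq κ] [∀ i, NormedAddCommGroup (E i)] [∀ i, InnerProductSpace 𝕜 (E i)]
    [AddCommMonoid M] [Module 𝕜 M] (T : MultilinearMap 𝕜 E M) (X : ∀ i, E i) (i : κ)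
    (e : OrthonormalBasis ι 𝕜 (E i)) (v : E i) :
    ∑ a, inner 𝕜 (e a) v • T (Function.update X i (e a)) = T (Function.update X i v) := by
  conv_rhs => rw [← e.sum_repr' v]
  simp only [T.map_update_sum, T.map_update_smul]

theorem sum_wedgeOp_self {ι : Type*} [Fintype ι] (e : OrthonormalBasis ι ℝ V) (A : V) :
    ∑ a, wedgeOp A (e a) (e a) = (1 - Fintype.card ι : ℝ) • A := by
  have expand : ∑ a, ⟪A, e a⟫ • e a = A := by
    simpa only [real_inner_comm] using e.sum_repr' A
  simp only [wedgeOp, e.inner_eq_one, one_smul, Finset.sum_sub_distrib, expand, Finset.sum_const,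
    Finset.card_univ, sub_smul, Nat.cast_smul_eq_nsmul]

section Slots

variable {ι κ M : Type*} [Fintype ι] [DecidableEq κ] [AddCommGroup M] [Module ℝ M]
  (e : OrthonormalBasis ι ℝ V) (T : MultilinearMap ℝ (fun _ : κ => V) M) (X : κ → V)

theorem sum_map_update_wedgeOp_self_s2 (i : κ) (A : V) :
    ∑ a, T (Function.update X i (wedgeOp A (e a) (e a))) =
      (1 - Fintype.card ι : ℝ) • T (Function.update X i A) := by
  rw [← T.map_update_sum, sum_wedgeOp_self, T.map_update_smul]

theorem sum_map_update_wedgeOp_of_ne_s2 {i j : κ} (hij : i ≠ j) (A : V) :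
    ∑ a, T (Function.update (Function.update X i (e a)) j (wedgeOp A (e a) (X j))) =
      ⟪A, X j⟫ • metricContr e T i j X -
        T (Function.update (Function.update X i (X j)) j A) := by
  have expand : ∑ a, ⟪e a, X j⟫ • T (Function.update (Function.update X i (e a)) j A) =
      T (Function.update (Function.update X i (X j)) j A) := by
    simp only [Function.update_comm hij]
    exact sum_inner_smul_map_update T (Function.update X j A) i e (X j)
  simp only [wedgeOp, T.map_update_sub, T.map_update_smul, Finset.sum_sub_distrib,
    ← Finset.smul_sum, expand, metricContr_eq_sum e.orthonormal]

end Slots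

theorem sum_tact_wedgeOp {ι : Type*} [Fintype ι] {k : ℕ} (e : OrthonormalBasis ι ℝ V)
    (T : MultilinearMap ℝ (fun _ : Fin k => V) ℝ) (X : Fin k → V) (i : Fin k) (A : V) :
    ∑ a, tact (wedgeOp A (e a)) T (Function.update X i (e a)) =
      (∑ j, if i = j then 0 else T (Function.update (Function.update X i (X j)) j A))
      - (∑ j, if i = j then 0 else ⟪A, X j⟫ * metricContr e T i j X)
      + ((Fintype.card ι : ℝ) - 1) * T (Function.update X i A) := by
  have slot (j : Fin k) :
      ∑ a, T (Function.update (Function.update X i (e a)) j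
          (wedgeOp A (e a) (Function.update X i (e a) j))) =
        (if i = j then 0 else ⟪A, X j⟫ * metricContr e T i j X)
        - (if i = j then 0 else T (Function.update (Function.update X i (X j)) j A))
        + (if i = j then (1 - Fintype.card ι : ℝ) * T (Function.update X i A) else 0) := by
    rcases eq_or_ne i j with rfl | hij
    · simpa using sum_map_update_wedgeOp_self_s2 e T X i A
    · simpa [hij, hij.symm] using sum_map_update_wedgeOp_of_ne_s2 e T X hij A
  simp only [tact, Finset.sum_neg_distrib]
  rw [Finset.sum_comm]
  simp only [slot, Finset.sum_add_distrib, Finset.sum_sub_distrib, Finset.sum_ite_eq,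
    Finset.mem_univ, if_true]
  ring

theorem stmt2_general {ι : Type*} [Fintype ι] {k : ℕ} (e : OrthonormalBasis ι ℝ V)
    (H : V → V) (h : V → V → ℝ) (hh : ∀ X Y : V, h X Y = ⟪H X, Y⟫)
    (T : MultilinearMap ℝ (fun _ : Fin k => V) ℝ) (X : Fin k → V) :
    (∑ i, ∑ a, tact (wedgeOp (H (X i)) (e a)) T (Function.update X i (e a))) =
      (∑ i, ∑ j, if i = j then 0 else
          T (Function.update (Function.update X i (X j)) j (H (X i))))
      - (∑ i, ∑ j, if i = j then 0 else h (X i) (X j) * metricContr e T i j X)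
      - ((Fintype.card ι : ℝ) - 1) * tact H T X := by
  simp only [sum_tact_wedgeOp, hh, Finset.sum_add_distrib, Finset.sum_sub_distrib,
    ← Finset.mul_sum]
  rw [tact]
  ring

/-- the second half of the computation in the proof of Proposition 3.2. -/
theorem stmt2 {n k : ℕ} (e : OrthonormalBasis (Fin n) ℝ V)
    (H : V →ₗ[ℝ] V) (hHsym : ∀ X Y : V, ⟪H X, Y⟫ = ⟪X, H Y⟫)
    (h : V → V → ℝ) (hh : ∀ X Y : V, h X Y = ⟪H X, Y⟫)
    (T : MultilinearMap ℝ (fun _ : Fin k => V) ℝ) :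
    ∀ X : Fin k → V,
      (∑ i : Fin k, ∑ a : Fin n,
          tact (wedgeOp (H (X i)) (e a)) ⇑T (Function.update X i (e a))) =
        (∑ i : Fin k, ∑ j : Fin k, if i = j then 0 else
            T (Function.update (Function.update X i (X j)) j (H (X i))))
        - (∑ i : Fin k, ∑ j : Fin k, if i = j then 0 else
            h (X i) (X j) *
              ∑ a : Fin n, ∑ b : Fin n, ⟪e a, e b⟫ *
                T (Function.update (Function.update X i (e a)) j (e b)))
        - ((n : ℝ) - 1) * tact ⇑H ⇑T X := by
  intro X
  simpa only [Fintype.card_fin, metricContr, smul_eq_mul] using stmt2_general e H h hh T X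
end
end

section
/- Let h be a symmetric bilinear form on V with associated symmetric endomorphism H. Every symmetric (0,2)-tensor T on V satisfies ⟨Ric_{h⧆g}(T), T⟩ = −n·⟨HT, T⟩ − 4·tr(T)·⟨T,h⟩ + 2·tr(h)·|T|², where (HT)(X,Y) = −T(H(X),Y) − T(X,H(Y)), ⟨T,h⟩ = Σ_{a,b} T(e_a,e_b)h(e_a,e_b), and tr(T) = Σ_a T(e_a,e_a). -/
/-!
The curvature endomorphism of `h ⧆ g` is `(X, Y) ↦ H X ∧ Y + X ∧ H Y`, so every sum over the
orthonormal basis in the curvature term is a basis expansion or a trace. For symmetric `T` this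
gives the pointwise identity
`Ric_{h ⧆ g}(T) = -n H T + 2 tr(h) T - 2 tr(T) h - 2 ⟨T, h⟩ g`.
Pairing with `T`, each of the last two terms contributes `-2 tr(T) ⟨T, h⟩`, because
`⟨g, T⟩ = tr(T)`.
-/

open scoped RealInnerProductSpace BigOperators
open Finset

noncomputable section

variable {V : Type*} [NormedAddCommGroup V] [InnerProductSpace ℝ V]

lemma tinner_two {W : Type*} {n : ℕ} (e : Fin n → W) (S T : (Fin 2 → W) → ℝ) :
    tinner e S T = ∑ a, ∑ b, S ![e a, e b] * T ![e a, e b] := by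
  have comp_pair (a b : Fin n) : (fun k => e (![a, b] k)) = ![e a, e b] := by
    ext k; fin_cases k <;> rfl
  simp only [tinner, ← (finTwoArrowEquiv (Fin n)).symm.sum_comp, Fintype.sum_prod_type,
    finTwoArrowEquiv_symm_apply, comp_pair]

lemma update_pair_zero {W : Type*} (X Y Z : W) : Function.update ![X, Y] 0 Z = ![Z, Y] :=
  Fin.update_cons_zero (α := fun _ => W) X ![Y] Z

lemma update_pair_one {W : Type*} (X Y Z : W) : Function.update ![X, Y] 1 Z = ![X, Z] := by
  ext k; fin_cases k <;> rfl

lemma tact_two {W : Type*} (L : W → W) (T : (Fin 2 → W) → ℝ) (X Y : W) :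
    tact L T ![X, Y] = -(T ![L X, Y] + T ![X, L Y]) := by
  simp only [tact, Fin.sum_univ_two, update_pair_zero, update_pair_one, Matrix.cons_val_zero,
    Matrix.cons_val_one]

lemma ricTerm_two {n : ℕ} (e : Fin n → V) (R : V → V → V → V → ℝ) (T : (Fin 2 → V) → ℝ)
    (X Y : V) :
    ricTerm e R T ![X, Y] =
      -∑ j, (T ![curvOp e R X (e j) (e j), Y] + T ![e j, curvOp e R X (e j) Y])
      - ∑ j, (T ![curvOp e R Y (e j) X, e j] + T ![X, curvOp e R Y (e j) (e j)]) := by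
  simp only [ricTerm, Fin.sum_univ_two, update_pair_zero, update_pair_one, tact_two,
    Matrix.cons_val_zero, Matrix.cons_val_one, sum_neg_distrib, sub_eq_add_neg]

/-- A `(0,2)`-tensor regarded as a bilinear form, so that linearity in either argument is available
through the API of linear maps. -/
def bilinOfTensor (T : MultilinearMap ℝ (fun _ : Fin 2 => V) ℝ) : LinearMap.BilinForm ℝ V :=
  LinearMap.mk₂ ℝ (fun X Y => T ![X, Y])
    (fun X X' Y => T.cons_add ![Y] X X')
    (fun c X Y => T.cons_smul ![Y] c X)
    (fun X Y Y' => (T.curryLeft X).cons_add ![] Y Y')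
    (fun c X Y => (T.curryLeft X).cons_smul ![] c Y)

lemma bilinOfTensor_apply (T : MultilinearMap ℝ (fun _ : Fin 2 => V) ℝ) (X Y : V) :
    bilinOfTensor T X Y = T ![X, Y] := rfl

lemma sum_inner_mul_apply {ι : Type*} [Fintype ι] (e : OrthonormalBasis ι ℝ V) (f : V →ₗ[ℝ] ℝ)
    (Y : V) : ∑ j, ⟪e j, Y⟫ * f (e j) = f Y := by
  conv_rhs => rw [← e.sum_repr' Y]
  simp only [map_sum, map_smul, smul_eq_mul]

lemma sum_sum_mul_inner_map {ι : Type*} [Fintype ι] (e : OrthonormalBasis ι ℝ V) (H : V → V)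
    (B : LinearMap.BilinForm ℝ V) :
    ∑ a, ∑ b, B (e a) (e b) * ⟪H (e a), e b⟫ = ∑ a, B (e a) (H (e a)) := by
  refine sum_congr rfl fun a _ => ?_
  rw [← sum_inner_mul_apply e (B (e a)) (H (e a))]
  exact sum_congr rfl fun b _ => by rw [real_inner_comm, mul_comm]

lemma curvOp_eq_of_forall_inner {n : ℕ} (e : OrthonormalBasis (Fin n) ℝ V)
    {R : V → V → V → V → ℝ} {X Y Z A : V} (hR : ∀ W, R X Y Z W = ⟪A, W⟫) :
    curvOp e R X Y Z = A := by
  simp only [curvOp, hR, real_inner_comm _ A, e.sum_repr']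

lemma knProd_gf {H : V → V} {h : V → V → ℝ} (hh : ∀ X Y, h X Y = ⟪H X, Y⟫) (X Y Z W : V) :
    knProd h gf X Y Z W = ⟪wedgeOp (H X) Y Z + wedgeOp X (H Y) Z, W⟫ := by
  simp only [knProd, gf, hh, wedgeOp, inner_add_left, inner_sub_left, real_inner_smul_left]
  ring

lemma curvOp_knProd_gf {n : ℕ} (e : OrthonormalBasis (Fin n) ℝ V) {H : V → V} {h : V → V → ℝ}
    (hh : ∀ X Y, h X Y = ⟪H X, Y⟫) (X Y Z : V) :
    curvOp e (knProd h gf) X Y Z = wedgeOp (H X) Y Z + wedgeOp X (H Y) Z :=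
  curvOp_eq_of_forall_inner e (knProd_gf hh X Y Z)

section Contractions

variable {n : ℕ} (e : OrthonormalBasis (Fin n) ℝ V) {H : V →ₗ[ℝ] V} {h : V → V → ℝ}

lemma sum_curvOp_knProd_gf_self (hh : ∀ X Y, h X Y = ⟪H X, Y⟫) (X : V) :
    ∑ j, curvOp e (knProd h gf) X (e j) (e j) =
      (2 - n : ℝ) • H X - (∑ j, h (e j) (e j)) • X := by
  have sum_inner_smul_map : ∑ j, ⟪X, e j⟫ • H (e j) = H X := by
    conv_rhs => rw [← e.sum_repr' X]
    simp only [map_sum, map_smul, real_inner_comm]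
  have sum_inner_smul : ∑ j, ⟪H X, e j⟫ • e j = H X := by
    simpa only [real_inner_comm] using e.sum_repr' (H X)
  simp only [curvOp_knProd_gf e hh, wedgeOp, ← hh (e _), sum_add_distrib, sum_sub_distrib,
    sum_inner_smul, sum_inner_smul_map, e.inner_eq_one, one_smul, sum_const, card_univ,
    Fintype.card_fin, ← sum_smul, ← Nat.cast_smul_eq_nsmul ℝ]
  module

lemma sum_apply_curvOp_knProd_gf (hH : H.IsSymmetric) (hh : ∀ X Y, h X Y = ⟪H X, Y⟫)
    (B : LinearMap.BilinForm ℝ V) (X Y : V) :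
    ∑ j, B (e j) (curvOp e (knProd h gf) X (e j) Y) =
      h X Y * ∑ j, B (e j) (e j) - B Y (H X)
        + ⟪X, Y⟫ * ∑ a, ∑ b, B (e a) (e b) * h (e a) (e b) - B (H Y) X := by
  have pair_left (Y Z : V) : ∑ j, ⟪e j, Y⟫ * B (e j) Z = B Y Z :=
    sum_inner_mul_apply e (B.flip Z) Y
  simp only [curvOp_knProd_gf e hh, wedgeOp, map_add, map_sub, map_smul, smul_eq_mul,
    sum_add_distrib, sum_sub_distrib, hH (e _) Y, pair_left, ← mul_sum, hh,
    sum_sum_mul_inner_map e H B]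
  ring

/-- The left side is the first-slot part of `-Ric_{h ⧆ g}(B)(X, Y)`. -/
lemma sum_slot_knProd_gf (hH : H.IsSymmetric) (hh : ∀ X Y, h X Y = ⟪H X, Y⟫)
    (B : LinearMap.BilinForm ℝ V) (X Y : V) :
    ∑ j, (B (curvOp e (knProd h gf) X (e j) (e j)) Y + B (e j) (curvOp e (knProd h gf) X (e j) Y)) =
      (2 - n : ℝ) * B (H X) Y - (∑ j, h (e j) (e j)) * B X Y
        + h X Y * ∑ j, B (e j) (e j) - B Y (H X)
        + ⟪X, Y⟫ * ∑ a, ∑ b, B (e a) (e b) * h (e a) (e b) - B (H Y) X := by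
  rw [sum_add_distrib, ← LinearMap.sum_apply, ← map_sum, sum_curvOp_knProd_gf_self e hh,
    sum_apply_curvOp_knProd_gf e hH hh]
  simp only [map_sub, map_smul, LinearMap.sub_apply, LinearMap.smul_apply, smul_eq_mul]
  ring

lemma ricTerm_knProd_gf (hH : H.IsSymmetric) (hh : ∀ X Y, h X Y = ⟪H X, Y⟫)
    (T : MultilinearMap ℝ (fun _ : Fin 2 => V) ℝ) (hT : ∀ X Y, T ![X, Y] = T ![Y, X]) (X Y : V) :
    ricTerm e (knProd h gf) T ![X, Y] =
      -(n : ℝ) * tact H T ![X, Y] + 2 * (∑ a, h (e a) (e a)) * T ![X, Y]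
        - 2 * (∑ a, T ![e a, e a]) * h X Y
        - 2 * (∑ a, ∑ b, T ![e a, e b] * h (e a) (e b)) * ⟪X, Y⟫ := by
  have slot := sum_slot_knProd_gf e hH hh (bilinOfTensor T)
  simp only [bilinOfTensor_apply] at slot
  have slot_swap : ∑ j, (T ![curvOp e (knProd h gf) Y (e j) X, e j]
        + T ![X, curvOp e (knProd h gf) Y (e j) (e j)]) =
      ∑ j, (T ![curvOp e (knProd h gf) Y (e j) (e j), X]
        + T ![e j, curvOp e (knProd h gf) Y (e j) X]) :=
    sum_congr rfl fun j _ => by rw [hT _ (e j), hT X, add_comm]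
  have h_symm : h Y X = h X Y := by rw [hh, hh, hH, real_inner_comm]
  rw [ricTerm_two, slot_swap, slot, slot, tact_two, h_symm, real_inner_comm X Y, hT Y X,
    hT Y (H X), hT X (H Y)]
  ring

end Contractions

/-- Proposition 3.3(1), second identity. -/
theorem stmt4 {n : ℕ} (e : OrthonormalBasis (Fin n) ℝ V)
    (H : V →ₗ[ℝ] V) (hHsym : ∀ X Y : V, ⟪H X, Y⟫ = ⟪X, H Y⟫)
    (h : V → V → ℝ) (hh : ∀ X Y : V, h X Y = ⟪H X, Y⟫)
    (T : MultilinearMap ℝ (fun _ : Fin 2 => V) ℝ)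
    (hTsym : ∀ X Y : V, T ![X, Y] = T ![Y, X]) :
    tinner ⇑e (ricTerm ⇑e (knProd h gf) ⇑T) ⇑T =
      -(n : ℝ) * tinner ⇑e (tact ⇑H ⇑T) ⇑T
      - 4 * (∑ a : Fin n, T ![e a, e a]) *
          (∑ a : Fin n, ∑ b : Fin n, T ![e a, e b] * h (e a) (e b))
      + 2 * (∑ a : Fin n, h (e a) (e a)) * tinner ⇑e ⇑T ⇑T := by
  have pair_g : ∑ a, ∑ b, ⟪e a, e b⟫ * T ![e a, e b] = ∑ a, T ![e a, e a] := by
    simp only [e.inner_eq_ite, ite_mul, one_mul, zero_mul, sum_ite_eq, mem_univ, if_true]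
  rw [tinner_two]
  calc ∑ a, ∑ b, ricTerm e (knProd h gf) T ![e a, e b] * T ![e a, e b]
    _ = ∑ a, ∑ b, (-(n : ℝ) * (tact H T ![e a, e b] * T ![e a, e b])
          + 2 * (∑ c, h (e c) (e c)) * (T ![e a, e b] * T ![e a, e b])
          - 2 * (∑ c, T ![e c, e c]) * (T ![e a, e b] * h (e a) (e b))
          - 2 * (∑ c, ∑ d, T ![e c, e d] * h (e c) (e d)) * (⟪e a, e b⟫ * T ![e a, e b])) := by
        refine sum_congr rfl fun a _ => sum_congr rfl fun b _ => ?_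
        rw [ricTerm_knProd_gf e hHsym hh T hTsym]
        ring
    _ = _ := by
        simp only [sum_add_distrib, sum_sub_distrib, ← mul_sum, pair_g, tinner_two]
        ring
end
end

section
/- Let H be a symmetric endomorphism of V and let ω be a p-form on V. Then for all X_1,…,X_p ∈ V: Σ_{i≠j} (ω∘τ_{ij})(X_1,…,H(X_i),…,X_p) = (p−1)·(Hω)(X_1,…,X_p), where the sum runs over ordered pairs 1 ≤ i,j ≤ p with i ≠ j and in (ω∘τ_{ij}) the argument H(X_i) occupies the i-th slot (the l-th slot holding X_l for l ≠ i). -/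
open scoped RealInnerProductSpace BigOperators
open Finset

noncomputable section

variable {V : Type*} [NormedAddCommGroup V] [InnerProductSpace ℝ V]

section AlternatingMap

open Function (update)

variable {R M N ι : Type*} [Semiring R] [AddCommMonoid M] [Module R M] [AddCommGroup N] [Module R N]
  [DecidableEq ι]

theorem alternatingMap_update_update_eq_neg (ω : M [⋀^ι]→ₗ[R] N) (v : ι → M) (x : M) {i j : ι}
    (hij : i ≠ j) :
    ω (update (update v i (v j)) j x) = -ω (update v i x) := by
  have eq_comp_swap : update (update v i (v j)) j x = update v i x ∘ Equiv.swap i j := by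
    rw [Equiv.comp_swap_eq_update, Function.update_self, Function.update_of_ne hij.symm,
      Function.update_comm hij.symm, Function.update_idem]
  rw [eq_comp_swap, ω.map_swap _ hij]

theorem sum_ite_eq_zero_const [Fintype ι] (i : ι) (c : N) :
    (∑ j, if i = j then 0 else c) = ((Fintype.card ι : ℤ) - 1) • c := by
  have ite_eq_sub (j : ι) : (if i = j then 0 else c) = c - if i = j then c else 0 := by
    split_ifs <;> simp only [sub_self, sub_zero]
  simp only [ite_eq_sub, sum_sub_distrib, sum_const, sum_ite_eq, mem_univ, if_true, card_univ,
    sub_smul, natCast_zsmul, one_smul]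

theorem stmt5_general [Fintype ι] (ω : M [⋀^ι]→ₗ[R] N) (v w : ι → M) :
    (∑ i, ∑ j, if i = j then 0 else ω (update (update v i (v j)) j (w i))) =
      ((Fintype.card ι : ℤ) - 1) • -∑ i, ω (update v i (w i)) :=
  calc
    _ = ∑ i, ∑ j, if i = j then 0 else -ω (update v i (w i)) :=
      sum_congr rfl fun i _ => sum_congr rfl fun j _ =>
        ite_congr rfl (fun _ => rfl) (alternatingMap_update_update_eq_neg ω v (w i))
    _ = ∑ i, ((Fintype.card ι : ℤ) - 1) • -ω (update v i (w i)) := by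
      simp only [sum_ite_eq_zero_const]
    _ = _ := by rw [← smul_sum, sum_neg_distrib]

end AlternatingMap

/-- for a `p`-form, `Σ_{i≠j} (ω∘τ_{ij})(X₁,…,H(Xᵢ),…,X_p) = (p−1)(Hω)`. -/
theorem stmt5 {p : ℕ} (H : V →ₗ[ℝ] V) (hHsym : ∀ X Y : V, ⟪H X, Y⟫ = ⟪X, H Y⟫)
    (ω : AlternatingMap ℝ V ℝ (Fin p)) :
    ∀ X : Fin p → V,
      (∑ i : Fin p, ∑ j : Fin p, if i = j then 0 else
          ω (Function.update (Function.update X i (X j)) j (H (X i)))) =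
        ((p : ℝ) - 1) * tact ⇑H ⇑ω X := by
  intro X
  simpa [tact] using stmt5_general ω X (fun i => H (X i))
end
end

section
/- Let Rm be an algebraic curvature tensor on V and let H be a symmetric endomorphism of V. Then for all X_1, X_2, X_3, X_4 ∈ V: Σ_{i≠j} (Rm∘τ_{ij})(X_1,…,H(X_i),…,X_4) = 0, where the sum runs over ordered pairs 1 ≤ i,j ≤ 4 with i ≠ j and in (Rm∘τ_{ij}) the argument H(X_i) occupies the i-th slot (the l-th slot holding X_l for l ≠ i). -/
/-!
Writing `Y` for `X` with its `i`-th entry replaced by `H (X i)`, the sum over `j ≠ i` for fixed `i`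
is `∑_{j ≠ i} (Rm ∘ τ_{ij})(Y)`, and it already vanishes: for `i = 0` the symmetries of `Rm` turn
its three terms into the cyclic sum of the first Bianchi identity with `Y 0` in the last slot. The
slot symmetries of `Rm` permute the four slots transitively, so the other values of `i` reduce to
this one.
-/

open scoped RealInnerProductSpace BigOperators
open Finset

noncomputable section

variable {V : Type*} [NormedAddCommGroup V] [InnerProductSpace ℝ V]

section CurvatureSymmetries

variable {M G : Type*} [AddCommGroup G]

theorem update_comp_swap {ι : Type*} [DecidableEq ι] (X : ι → M) {i j : ι} (hij : i ≠ j) (h : M) :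
    Function.update X i h ∘ Equiv.swap i j = Function.update (Function.update X i (X j)) j h := by
  rw [Equiv.comp_swap_eq_update, Function.update_self, Function.update_of_ne hij.symm,
    Function.update_comm hij.symm, Function.update_idem]

/-- The symmetries of an algebraic curvature tensor, for a function of four arguments that need not
be multilinear. -/
structure HasCurvatureSymmetries (R : (Fin 4 → M) → G) : Prop where
  skew_left : ∀ x y z w, R ![x, y, z, w] = -R ![y, x, z, w]
  pair_symm : ∀ x y z w, R ![x, y, z, w] = R ![z, w, x, y]
  bianchi : ∀ x y z w, R ![x, y, z, w] + R ![y, z, x, w] + R ![z, x, y, w] = 0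

namespace HasCurvatureSymmetries

variable {R : (Fin 4 → M) → G}

theorem skew_right (hR : HasCurvatureSymmetries R) (x y z w : M) :
    R ![x, y, z, w] = -R ![x, y, w, z] := by
  rw [hR.pair_symm, hR.skew_left, hR.pair_symm]

theorem sum_swap_slot_zero (hR : HasCurvatureSymmetries R) (x y z w : M) :
    R ![y, x, z, w] + R ![z, y, x, w] + R ![w, y, z, x] = 0 :=
  calc R ![y, x, z, w] + R ![z, y, x, w] + R ![w, y, z, x]
      = R ![z, w, y, x] + R ![y, z, w, x] + R ![w, y, z, x] := by
        rw [hR.pair_symm y x, hR.skew_left z y, hR.skew_right y z, neg_neg]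
    _ = R ![y, z, w, x] + R ![z, w, y, x] + R ![w, y, z, x] := by
        rw [add_comm (R ![z, w, y, x])]
    _ = 0 := hR.bianchi y z w x

theorem sum_swap_slot_one (hR : HasCurvatureSymmetries R) (x y z w : M) :
    R ![y, x, z, w] + R ![x, z, y, w] + R ![x, w, z, y] = 0 :=
  calc R ![y, x, z, w] + R ![x, z, y, w] + R ![x, w, z, y]
      = -(R ![x, y, z, w] + R ![z, x, y, w] + R ![w, x, z, y]) := by
        rw [hR.skew_left y x, hR.skew_left x z, hR.skew_left x w, neg_add, neg_add]
    _ = 0 := by rw [hR.sum_swap_slot_zero y x z w, neg_zero]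

theorem sum_swap_slot_two (hR : HasCurvatureSymmetries R) (x y z w : M) :
    R ![z, y, x, w] + R ![x, z, y, w] + R ![x, y, w, z] = 0 :=
  calc R ![z, y, x, w] + R ![x, z, y, w] + R ![x, y, w, z]
      = R ![x, w, z, y] + R ![y, w, x, z] + R ![w, z, x, y] := by
        rw [hR.pair_symm z y, hR.pair_symm x z, hR.pair_symm x y]
    _ = R ![w, z, x, y] + R ![x, w, z, y] + R ![y, w, x, z] := by abel
    _ = 0 := hR.sum_swap_slot_zero z w x y

theorem sum_swap_slot_three (hR : HasCurvatureSymmetries R) (x y z w : M) :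
    R ![w, y, z, x] + R ![x, w, z, y] + R ![x, y, w, z] = 0 :=
  calc R ![w, y, z, x] + R ![x, w, z, y] + R ![x, y, w, z]
      = -(R ![w, y, x, z] + R ![x, w, y, z] + R ![x, y, z, w]) := by
        rw [hR.skew_right w y, hR.skew_right x w, hR.skew_right x y, neg_add, neg_add]
    _ = 0 := by rw [hR.sum_swap_slot_two x y w z, neg_zero]

theorem sum_comp_swap_eq_zero (hR : HasCurvatureSymmetries R) (Y : Fin 4 → M) (i : Fin 4) :
    (∑ j, if i = j then 0 else R (Y ∘ Equiv.swap i j)) = 0 := by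
  have eta (Z : Fin 4 → M) : R Z = R ![Z 0, Z 1, Z 2, Z 3] :=
    congrArg R (List.ofFn_injective rfl)
  fin_cases i <;>
    simp [Fin.sum_univ_four, eta (_ ∘ _), Equiv.swap_apply_def, hR.sum_swap_slot_zero,
      hR.sum_swap_slot_one, hR.sum_swap_slot_two, hR.sum_swap_slot_three]

end HasCurvatureSymmetries

theorem stmt8_general {R : (Fin 4 → M) → G} (hR : HasCurvatureSymmetries R) (X : Fin 4 → M)
    (i : Fin 4) (h : M) :
    (∑ j, if i = j then 0 else R (Function.update (Function.update X i (X j)) j h)) = 0 :=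
  calc _ = ∑ j, if i = j then 0 else R (Function.update X i h ∘ Equiv.swap i j) :=
        Finset.sum_congr rfl fun j _ => ite_congr rfl (fun _ => rfl) fun hij => by
          rw [update_comp_swap X hij]
    _ = 0 := hR.sum_comp_swap_eq_zero (Function.update X i h) i

end CurvatureSymmetries

/-- for an algebraic curvature tensor, `Σ_{i≠j} (Rm∘τ_{ij})(…,H(Xᵢ),…) = 0`. -/
theorem stmt8 (H : V →ₗ[ℝ] V) (hHsym : ∀ X Y : V, ⟪H X, Y⟫ = ⟪X, H Y⟫)
    (Rm : MultilinearMap ℝ (fun _ : Fin 4 => V) ℝ)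
    (hA : ∀ X Y Z W : V, Rm ![X, Y, Z, W] = -Rm ![Y, X, Z, W])
    (hP : ∀ X Y Z W : V, Rm ![X, Y, Z, W] = Rm ![Z, W, X, Y])
    (hB : ∀ X Y Z W : V,
      Rm ![X, Y, Z, W] + Rm ![Y, Z, X, W] + Rm ![Z, X, Y, W] = 0) :
    ∀ X : Fin 4 → V,
      (∑ i : Fin 4, ∑ j : Fin 4, if i = j then 0 else
          Rm (Function.update (Function.update X i (X j)) j (H (X i)))) = 0 :=
  fun X => Finset.sum_eq_zero fun i _ => stmt8_general ⟨hA, hP, hB⟩ X i (H (X i))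
end
end

section
/- Let Rm be a (0,4)-tensor on V with Rm(X,Y,Z,W) = −Rm(Y,X,Z,W) = Rm(Z,W,X,Y), and let h be a symmetric bilinear form on V. Define c(X,Z) = Σ_{a=1}^n Rm(X, H(e_a), Z, e_a), where H is the symmetric endomorphism associated to h; then c is a symmetric bilinear form and for all X_1, X_2, X_3, X_4 ∈ V: Σ_{i≠j} g(X_i,X_j)·c_{ij}(h⊗Rm)(X_1,…,X̂_i,…,X̂_j,…,X_4) = 2·(g ⧆ c)(X_1,X_2,X_3,X_4), where the sum runs over ordered pairs 1 ≤ i,j ≤ 4 with i ≠ j and hats denote omitted arguments. -/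
open scoped RealInnerProductSpace BigOperators
open Finset

noncomputable section

variable {V : Type*} [NormedAddCommGroup V] [InnerProductSpace ℝ V]

/-!
Expanding `H (e a)` in the orthonormal basis identifies `c` with the contraction of `h ⊗ Rm` over
the second and fourth slots of `Rm`. The contractions over `{1,2}` and `{3,4}` vanish, since they
pair the symmetric `h` with slots in which `Rm` is skew. The symmetries of `Rm` move every other
pair of slots to `{2,4}`, with sign `+` for `{1,3}`, `{2,4}` and `-` for `{1,4}`, `{2,3}`: these are
exactly the four terms of `g ⧆ c`, and each unordered pair of slots occurs twice in the sum.
-/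

section Contraction

variable {ι κ M R : Type*} [Fintype ι] [DecidableEq κ] [CommRing R]

/-- The contraction `c_{ij}(h ⊗ T)` with respect to the family `e`, written as a function of all
arguments `X` of `T`: the arguments `X i` and `X j` are overwritten, so that the remaining ones are
those of the tensor `c_{ij}(h ⊗ T)`. -/
def contraction (h : M → M → R) (e : ι → M) (i j : κ) (T : (κ → M) → R) (X : κ → M) : R :=
  ∑ a, ∑ b, h (e a) (e b) * T (Function.update (Function.update X i (e a)) j (e b))

theorem contraction_comm {h : M → M → R} (hsymm : ∀ x y, h x y = h y x) (e : ι → M) {i j : κ}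
    (hij : i ≠ j) (T : (κ → M) → R) (X : κ → M) :
    contraction h e i j T X = contraction h e j i T X := by
  unfold contraction
  rw [sum_comm]
  refine sum_congr rfl fun b _ => sum_congr rfl fun a _ => ?_
  rw [hsymm, Function.update_comm hij]

-- `FinVec.etaExpand Y` unfolds to `![Y 0, Y 1, …]`, so that at numerals `i`, `j` the updates on the
-- right-hand side evaluate definitionally.
theorem contraction_eq_sum_etaExpand (h : M → M → R) (e : ι → M) {k : ℕ} (i j : Fin k)
    (T : (Fin k → M) → R) (X : Fin k → M) :
    contraction h e i j T X = ∑ a, ∑ b, h (e a) (e b) *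
      T (FinVec.etaExpand (Function.update (Function.update X i (e a)) j (e b))) := by
  simp only [FinVec.etaExpand_eq, contraction]

theorem sum_sum_symm_mul_skew [IsAddTorsionFree R] {s t : ι → ι → R}
    (hs : ∀ a b, s a b = s b a) (ht : ∀ a b, t a b = -t b a) : ∑ a, ∑ b, s a b * t a b = 0 := by
  refine self_eq_neg.mp ?_
  calc ∑ a, ∑ b, s a b * t a b
      = ∑ b, ∑ a, s a b * t a b := sum_comm
    _ = ∑ b, ∑ a, -(s b a * t b a) :=
        sum_congr rfl fun b _ => sum_congr rfl fun a _ => by rw [hs, ht, mul_neg]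
    _ = -∑ b, ∑ a, s b a * t b a := by simp only [sum_neg_distrib]

end Contraction

section CurvatureSymmetries

variable {ι M R : Type*} [Fintype ι] [CommRing R]

/-- The symmetries of a curvature tensor other than the Bianchi identity: skewness in the first two
slots and invariance under exchanging the first two slots with the last two. -/
structure HasCurvatureSymmetries_s9 (T : (Fin 4 → M) → R) : Prop where
  skew_left : ∀ x y z w, T ![x, y, z, w] = -T ![y, x, z, w]
  pair_symm : ∀ x y z w, T ![x, y, z, w] = T ![z, w, x, y]

theorem HasCurvatureSymmetries_s9.skew_right {T : (Fin 4 → M) → R} (hT : HasCurvatureSymmetries_s9 T)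
    (x y z w : M) : T ![x, y, z, w] = -T ![x, y, w, z] := by
  rw [hT.pair_symm, hT.skew_left, hT.pair_symm]

/-- The Ricci contraction `c₂₄(h ⊗ T)` with respect to the family `e`. For `h` the metric and `e` an
orthonormal basis it is the Ricci tensor of `T`. -/
def ricciContraction (h : M → M → R) (e : ι → M) (T : (Fin 4 → M) → R) (x z : M) : R :=
  ∑ a, ∑ b, h (e a) (e b) * T ![x, e a, z, e b]

theorem ricciContraction_add_left [AddCommGroup M] [Module R M] (h : M → M → R) (e : ι → M)
    (T : MultilinearMap R (fun _ : Fin 4 => M) R) (x x' z : M) :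
    ricciContraction h e T (x + x') z =
      ricciContraction h e T x z + ricciContraction h e T x' z := by
  have hadd (y w : M) : T ![x + x', y, z, w] = T ![x, y, z, w] + T ![x', y, z, w] :=
    T.cons_add ![y, z, w] x x'
  simp only [ricciContraction, hadd, mul_add, sum_add_distrib]

theorem ricciContraction_smul_left [AddCommGroup M] [Module R M] (h : M → M → R) (e : ι → M)
    (T : MultilinearMap R (fun _ : Fin 4 => M) R) (r : R) (x z : M) :
    ricciContraction h e T (r • x) z = r * ricciContraction h e T x z := by
  have hsmul (y w : M) : T ![r • x, y, z, w] = r * T ![x, y, z, w] := T.cons_smul ![y, z, w] r x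
  simp only [ricciContraction, hsmul, mul_sum, mul_left_comm]

variable {h : M → M → R} {T : (Fin 4 → M) → R}

theorem ricciContraction_comm (hsymm : ∀ x y, h x y = h y x) (e : ι → M)
    (hT : HasCurvatureSymmetries_s9 T) (x z : M) :
    ricciContraction h e T x z = ricciContraction h e T z x := by
  unfold ricciContraction
  rw [sum_comm]
  refine sum_congr rfl fun b _ => sum_congr rfl fun a _ => ?_
  rw [hsymm, hT.pair_symm]

theorem contraction_zero_one [IsAddTorsionFree R] (hsymm : ∀ x y, h x y = h y x) (e : ι → M)
    (hT : HasCurvatureSymmetries_s9 T) (X : Fin 4 → M) : contraction h e 0 1 T X = 0 := by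
  rw [contraction_eq_sum_etaExpand]
  exact sum_sum_symm_mul_skew (fun a b => hsymm (e a) (e b))
    fun a b => hT.skew_left (e a) (e b) (X 2) (X 3)

theorem contraction_two_three [IsAddTorsionFree R] (hsymm : ∀ x y, h x y = h y x) (e : ι → M)
    (hT : HasCurvatureSymmetries_s9 T) (X : Fin 4 → M) : contraction h e 2 3 T X = 0 := by
  rw [contraction_eq_sum_etaExpand]
  exact sum_sum_symm_mul_skew (fun a b => hsymm (e a) (e b))
    fun a b => hT.skew_right (X 0) (X 1) (e a) (e b)

theorem contraction_one_three (h : M → M → R) (e : ι → M) (T : (Fin 4 → M) → R) (X : Fin 4 → M) :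
    contraction h e 1 3 T X = ricciContraction h e T (X 0) (X 2) :=
  contraction_eq_sum_etaExpand h e 1 3 T X

theorem contraction_zero_two (h : M → M → R) (e : ι → M) (hT : HasCurvatureSymmetries_s9 T)
    (X : Fin 4 → M) : contraction h e 0 2 T X = ricciContraction h e T (X 1) (X 3) := by
  have hswap (u v : M) : T ![X 1, u, X 3, v] = T ![u, X 1, v, X 3] := by
    rw [hT.skew_left, hT.skew_right, neg_neg]
  simp only [ricciContraction, hswap]
  exact contraction_eq_sum_etaExpand h e 0 2 T X

theorem contraction_zero_three (h : M → M → R) (e : ι → M) (hT : HasCurvatureSymmetries_s9 T)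
    (X : Fin 4 → M) : contraction h e 0 3 T X = -ricciContraction h e T (X 1) (X 2) := by
  simp only [ricciContraction, hT.skew_left (X 1), mul_neg, sum_neg_distrib, neg_neg]
  exact contraction_eq_sum_etaExpand h e 0 3 T X

theorem contraction_one_two (h : M → M → R) (e : ι → M) (hT : HasCurvatureSymmetries_s9 T)
    (X : Fin 4 → M) : contraction h e 1 2 T X = -ricciContraction h e T (X 0) (X 3) := by
  simp only [ricciContraction, hT.skew_right _ _ (X 3), mul_neg, sum_neg_distrib, neg_neg]
  exact contraction_eq_sum_etaExpand h e 1 2 T X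

theorem sum_offDiag_fin_four_of_symm {A : Type*} [AddCommMonoid A] {F : Fin 4 → Fin 4 → A}
    (hF : ∀ i j, i ≠ j → F i j = F j i) :
    (∑ i, ∑ j, if i = j then 0 else F i j) =
      2 • (F 0 1 + F 0 2 + F 0 3 + F 1 2 + F 1 3 + F 2 3) := by
  simp only [Fin.sum_univ_four, Fin.reduceEq, if_true, if_false]
  rw [hF 1 0 (by decide), hF 2 0 (by decide), hF 2 1 (by decide), hF 3 0 (by decide),
    hF 3 1 (by decide), hF 3 2 (by decide)]
  abel

theorem sum_offDiag_mul_contraction {g h : M → M → ℝ} (hg : ∀ x y, g x y = g y x)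
    (hsymm : ∀ x y, h x y = h y x) (e : ι → M) {T : (Fin 4 → M) → ℝ}
    (hT : HasCurvatureSymmetries_s9 T) (X : Fin 4 → M) :
    (∑ i, ∑ j, if i = j then 0 else g (X i) (X j) * contraction h e i j T X) =
      2 * knProd g (ricciContraction h e T) (X 0) (X 1) (X 2) (X 3) := by
  have hpair (i j : Fin 4) (hij : i ≠ j) : g (X i) (X j) * contraction h e i j T X =
      g (X j) (X i) * contraction h e j i T X := by
    rw [hg, contraction_comm hsymm e hij]
  rw [sum_offDiag_fin_four_of_symm hpair, contraction_zero_one hsymm e hT,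
    contraction_two_three hsymm e hT, contraction_zero_two h e hT, contraction_one_three,
    contraction_zero_three h e hT, contraction_one_two h e hT, knProd, nsmul_eq_mul]
  push_cast
  ring

end CurvatureSymmetries

section OrthonormalBasis

variable {ι : Type*} [Fintype ι] {H : V → V} {h : V → V → ℝ}

theorem sum_apply_update_map_eq_contraction {κ : Type*} [DecidableEq κ]
    (e : OrthonormalBasis ι ℝ V) (hh : ∀ x y, h x y = ⟪H x, y⟫)
    (T : MultilinearMap ℝ (fun _ : κ => V) ℝ) (i j : κ) (X : κ → V) :
    ∑ a, T (Function.update (Function.update X i (e a)) j (H (e a))) =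
      contraction h e i j T X := by
  have hH (a : ι) : H (e a) = ∑ b, h (e a) (e b) • e b := by
    simp only [hh, real_inner_comm (e _) (H (e a)), e.sum_repr']
  simp only [hH, T.map_update_sum, T.map_update_smul, smul_eq_mul, contraction]

theorem sum_apply_map_eq_ricciContraction (e : OrthonormalBasis ι ℝ V)
    (hsymm : ∀ x y, h x y = h y x) (hh : ∀ x y, h x y = ⟪H x, y⟫)
    (T : MultilinearMap ℝ (fun _ : Fin 4 => V) ℝ) (x z : V) :
    ∑ a, T ![x, H (e a), z, e a] = ricciContraction h e T x z := by
  have hslots (u v : V) :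
      T ![x, v, z, u] = T (Function.update (Function.update ![x, 0, z, 0] 3 u) 1 v) := by
    rw [← FinVec.etaExpand_eq (Function.update _ 1 v)]
    rfl
  calc ∑ a, T ![x, H (e a), z, e a]
      = contraction h e 3 1 T ![x, 0, z, 0] := by
        simp only [hslots, sum_apply_update_map_eq_contraction e hh]
    _ = contraction h e 1 3 T ![x, 0, z, 0] := contraction_comm hsymm e (by decide) T _
    _ = ricciContraction h e T x z := contraction_one_three h e T _

end OrthonormalBasis

/-- `Σ_{i≠j} g(Xᵢ,Xⱼ)·c_{ij}(h⊗Rm) = 2 (g ⧆ c₂₄(h⊗Rm))`, and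
`c = c₂₄(h⊗Rm)` is a symmetric bilinear form. -/
theorem stmt9 {n : ℕ} (e : OrthonormalBasis (Fin n) ℝ V)
    (H : V →ₗ[ℝ] V) (hHsym : ∀ X Y : V, ⟪H X, Y⟫ = ⟪X, H Y⟫)
    (h : V → V → ℝ) (hh : ∀ X Y : V, h X Y = ⟪H X, Y⟫)
    (Rm : MultilinearMap ℝ (fun _ : Fin 4 => V) ℝ)
    (hA : ∀ X Y Z W : V, Rm ![X, Y, Z, W] = -Rm ![Y, X, Z, W])
    (hP : ∀ X Y Z W : V, Rm ![X, Y, Z, W] = Rm ![Z, W, X, Y])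
    (c : V → V → ℝ) (hc : ∀ X Z : V, c X Z = ∑ a : Fin n, Rm ![X, H (e a), Z, e a]) :
    (∀ X Z : V, c X Z = c Z X) ∧
    (∀ X X' Z : V, c (X + X') Z = c X Z + c X' Z) ∧
    (∀ (r : ℝ) (X Z : V), c (r • X) Z = r * c X Z) ∧
    (∀ X Z Z' : V, c X (Z + Z') = c X Z + c X Z') ∧
    (∀ (r : ℝ) (X Z : V), c X (r • Z) = r * c X Z) ∧
    (∀ X : Fin 4 → V,
      (∑ i : Fin 4, ∑ j : Fin 4, if i = j then 0 else
          ⟪X i, X j⟫ *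
            ∑ a : Fin n, ∑ b : Fin n, h (e a) (e b) *
              Rm (Function.update (Function.update X i (e a)) j (e b))) =
        2 * knProd gf c (X 0) (X 1) (X 2) (X 3)) := by
  have hsymm (x y : V) : h x y = h y x := by rw [hh, hh, hHsym, real_inner_comm]
  have hRm : HasCurvatureSymmetries_s9 Rm := ⟨hA, hP⟩
  obtain rfl : c = ricciContraction h e Rm := by
    funext x z
    rw [hc, sum_apply_map_eq_ricciContraction e hsymm hh]
  have hcomm := ricciContraction_comm hsymm e hRm
  have hadd := ricciContraction_add_left h e Rm
  have hsmul := ricciContraction_smul_left h e Rm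
  refine ⟨hcomm, hadd, hsmul, fun x z z' => ?_, fun r x z => ?_, fun X => ?_⟩
  · rw [hcomm, hadd, hcomm z, hcomm z']
  · rw [hcomm, hsmul, hcomm z]
  · exact sum_offDiag_mul_contraction (fun x y => real_inner_comm y x) hsymm e hRm X
end
end

section
/- Let h be a symmetric bilinear form on V. Every Weyl tensor W on V satisfies ⟨Ric_{h⧆g}(W), g ⧆ g⟩ = 0. -/
/-!
The key identity is `⟨Ric_R(T), S⟩ = ½ Σ_{a,b} ⟨R(e_a, e_b) T, (e_a ∧ e_b) S⟩`. Moving the replaced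
index from `T` to `S` turns the left-hand side into a sum of `R(e_a, e_b) T` against `S` with an
index `b` replaced by `a`. Since `R(X, Y)` is skew in `X, Y`, only the part of the second factor
that is skew in `a, b` counts, and this part is the action of the rotation generator `e_a ∧ e_b`
on `S`.
Every skew endomorphism annihilates `g ⧆ g`, so the right-hand side vanishes for `S = g ⧆ g`.
-/

open scoped RealInnerProductSpace BigOperators
open Finset

noncomputable section

variable {V : Type*} [NormedAddCommGroup V] [InnerProductSpace ℝ V]

theorem sum_sum_update_apply {ι α M : Type*} [Fintype ι] [DecidableEq ι] [Fintype α]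
    [AddCommMonoid M] (i : ι) (F : (ι → α) → α → M) :
    ∑ I : ι → α, ∑ a, F (Function.update I i a) (I i) = ∑ J : ι → α, ∑ a, F J a := by
  have swap_involutive : Function.Involutive
      fun p : (ι → α) × α => (Function.update p.1 i p.2, p.1 i) := fun p => by simp
  rw [← Fintype.sum_prod_type', ← Fintype.sum_prod_type']
  exact Equiv.sum_comp swap_involutive.toPerm fun p => F p.1 p.2

theorem tact_neg {E : Type*} [AddCommGroup E] [Module ℝ E] {k : ℕ} (L : E → E)
    (T : MultilinearMap ℝ (fun _ : Fin k => E) ℝ) (X : Fin k → E) :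
    tact (-L) T X = -tact L T X := by
  simp only [tact, Pi.neg_apply, MultilinearMap.map_update_neg, sum_neg_distrib]

theorem curvOp_swap {n : ℕ} (e : Fin n → V) {R : V → V → V → V → ℝ}
    (hR : ∀ X Y Z W, R X Y Z W = -R Y X Z W) (X Y : V) :
    curvOp e R X Y = -curvOp e R Y X := by
  funext Z
  simp only [curvOp, hR X Y, neg_smul, sum_neg_distrib, Pi.neg_apply]

theorem tinner_ricTerm {n k : ℕ} (e : Fin n → V) (R : V → V → V → V → ℝ)
    (T S : (Fin k → V) → ℝ) :
    tinner e (ricTerm e R T) S =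
      ∑ J : Fin k → Fin n, ∑ i, ∑ a,
        tact (curvOp e R (e a) (e (J i))) T (e ∘ J) * S (e ∘ Function.update J i a) := by
  calc tinner e (ricTerm e R T) S
      = ∑ i, ∑ I : Fin k → Fin n, ∑ j,
          tact (curvOp e R (e (I i)) (e j)) T (e ∘ Function.update I i j) * S (e ∘ I) := by
        rw [sum_comm]
        simp only [tinner, ricTerm, sum_mul, Function.comp_update]
        rfl
    _ = ∑ i, ∑ J : Fin k → Fin n, ∑ a,
          tact (curvOp e R (e a) (e (J i))) T (e ∘ J) * S (e ∘ Function.update J i a) := by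
        refine sum_congr rfl fun i _ => ?_
        rw [← sum_sum_update_apply i]
        simp only [Function.update_self, Function.update_idem, Function.update_eq_self]
    _ = _ := sum_comm

theorem tact_wedgeOp_orthonormal {n k : ℕ} {e : Fin n → V} (he : Orthonormal ℝ e)
    (S : MultilinearMap ℝ (fun _ : Fin k => V) ℝ) (a b : Fin n) (J : Fin k → Fin n) :
    tact (wedgeOp (e a) (e b)) S (e ∘ J) =
      ∑ i, ((if b = J i then S (e ∘ Function.update J i a) else 0) -
        if a = J i then S (e ∘ Function.update J i b) else 0) := by
  simp only [tact, wedgeOp, Function.comp_apply, orthonormal_iff_ite.mp he,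
    MultilinearMap.map_update_sub, MultilinearMap.map_update_smul, smul_eq_mul, ite_mul, one_mul,
    zero_mul, ← sum_neg_distrib, neg_sub, Function.comp_update]

theorem sum_skew_mul_tact_wedgeOp {n k : ℕ} {e : Fin n → V} (he : Orthonormal ℝ e)
    (S : MultilinearMap ℝ (fun _ : Fin k => V) ℝ) {G : Fin n → Fin n → ℝ}
    (hG : ∀ a b, G a b = -G b a) (J : Fin k → Fin n) :
    ∑ a, ∑ b, G a b * tact (wedgeOp (e a) (e b)) S (e ∘ J) =
      2 * ∑ i, ∑ a, G a (J i) * S (e ∘ Function.update J i a) := by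
  let A := ∑ i, ∑ a, G a (J i) * S (e ∘ Function.update J i a)
  have contract_right :
      ∑ a, ∑ b, ∑ i, G a b * (if b = J i then S (e ∘ Function.update J i a) else 0) = A := by
    simp only [sum_comm (t := (univ : Finset (Fin k)))]
    simp only [mul_ite, mul_zero, sum_ite_eq', mem_univ, if_true, A]
  have contract_left :
      ∑ a, ∑ b, ∑ i, G a b * (if a = J i then S (e ∘ Function.update J i b) else 0) = -A := by
    rw [sum_comm, ← contract_right]
    simp only [← sum_neg_distrib, ← neg_mul, ← hG]
  simp only [tact_wedgeOp_orthonormal he, mul_sum, mul_sub, sum_sub_distrib]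
  rw [contract_right, contract_left, sub_neg_eq_add, ← two_mul]
  simp only [A, mul_sum]

theorem two_mul_tinner_ricTerm {n k : ℕ} {e : Fin n → V} (he : Orthonormal ℝ e)
    {R : V → V → V → V → ℝ} (hR : ∀ X Y Z W, R X Y Z W = -R Y X Z W)
    (T S : MultilinearMap ℝ (fun _ : Fin k => V) ℝ) :
    2 * tinner e (ricTerm e R T) S =
      ∑ a, ∑ b, tinner e (tact (curvOp e R (e a) (e b)) T) (tact (wedgeOp (e a) (e b)) S) := by
  have curv_skew (J : Fin k → Fin n) (a b : Fin n) :
      tact (curvOp e R (e a) (e b)) T (e ∘ J) = -tact (curvOp e R (e b) (e a)) T (e ∘ J) := by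
    rw [curvOp_swap e hR, tact_neg]
  calc 2 * tinner e (ricTerm e R T) S
      = ∑ J : Fin k → Fin n, ∑ a, ∑ b, tact (curvOp e R (e a) (e b)) T (e ∘ J) *
          tact (wedgeOp (e a) (e b)) S (e ∘ J) := by
        simp only [tinner_ricTerm, mul_sum (s := univ (α := Fin k → Fin n)),
          sum_skew_mul_tact_wedgeOp he S (curv_skew _)]
    _ = ∑ a, ∑ b, ∑ J : Fin k → Fin n, tact (curvOp e R (e a) (e b)) T (e ∘ J) *
          tact (wedgeOp (e a) (e b)) S (e ∘ J) := by
        rw [sum_comm]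
        exact sum_congr rfl fun a _ => sum_comm

theorem tinner_ricTerm_eq_zero_of_tact {n k : ℕ} {e : Fin n → V} (he : Orthonormal ℝ e)
    {R : V → V → V → V → ℝ} (hR : ∀ X Y Z W, R X Y Z W = -R Y X Z W)
    (T S : MultilinearMap ℝ (fun _ : Fin k => V) ℝ)
    (hS : ∀ A B X, tact (wedgeOp A B) S X = 0) :
    tinner e (ricTerm e R T) S = 0 := by
  have double_eq_zero : 2 * tinner e (ricTerm e R T) S = 0 := by
    rw [two_mul_tinner_ricTerm he hR]
    simp only [tinner, hS, mul_zero, sum_const_zero]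
  linarith

theorem knProd_swap {E : Type*} (s₁ s₂ : E → E → ℝ) (X Y Z W : E) :
    knProd s₁ s₂ X Y Z W = -knProd s₁ s₂ Y X Z W := by
  simp only [knProd]
  ring

theorem tact_knProd_eq_zero_of_skew {E : Type*} {L : E → E} {s₁ s₂ : E → E → ℝ}
    (h₁ : ∀ X Y, s₁ (L X) Y = -s₁ X (L Y)) (h₂ : ∀ X Y, s₂ (L X) Y = -s₂ X (L Y))
    (X : Fin 4 → E) :
    tact L (fun X => knProd s₁ s₂ (X 0) (X 1) (X 2) (X 3)) X = 0 := by
  simp only [tact, knProd, Fin.sum_univ_four, Function.update, eq_rec_constant, dite_eq_ite,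
    Fin.isValue, Fin.reduceEq, one_ne_zero, zero_ne_one, ↓reduceIte, h₁, h₂]
  ring

theorem gf_wedgeOp_left (A B X Y : V) : gf (wedgeOp A B X) Y = -gf X (wedgeOp A B Y) := by
  simp only [gf, wedgeOp, inner_sub_left, inner_sub_right, real_inner_smul_left,
    real_inner_smul_right, real_inner_comm X]
  ring

/-- The Kulkarni–Nomizu product of two bilinear forms as a `(0,4)`-tensor, that is, `knProd`
bundled with its multilinearity, so that it can be paired with a curvature term `Ric_R(T)`. -/
def knProdMultilinear {E : Type*} [AddCommMonoid E] [Module ℝ E] (s₁ s₂ : E →ₗ[ℝ] E →ₗ[ℝ] ℝ) :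
    MultilinearMap ℝ (fun _ : Fin 4 => E) ℝ :=
  .mk' (fun X => knProd (fun x y => s₁ x y) (fun x y => s₂ x y) (X 0) (X 1) (X 2) (X 3))
    (fun X i x y => by
      fin_cases i <;>
      simp only [knProd, Function.update, eq_rec_constant, dite_eq_ite, Fin.zero_eta, Fin.mk_one,
        Fin.reduceFinMk, Fin.isValue, Fin.reduceEq, one_ne_zero, zero_ne_one, ↓reduceIte,
        map_add, LinearMap.add_apply] <;>
      ring)
    (fun X i c x => by
      fin_cases i <;>
      simp only [knProd, Function.update, eq_rec_constant, dite_eq_ite, Fin.zero_eta, Fin.mk_one,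
        Fin.reduceFinMk, Fin.isValue, Fin.reduceEq, one_ne_zero, zero_ne_one, ↓reduceIte,
        map_smul, LinearMap.smul_apply, smul_eq_mul] <;>
      ring)

theorem stmt13_general {n : ℕ} {e : Fin n → V} (he : Orthonormal ℝ e)
    {R : V → V → V → V → ℝ} (hR : ∀ X Y Z W, R X Y Z W = -R Y X Z W)
    (T : MultilinearMap ℝ (fun _ : Fin 4 => V) ℝ) :
    tinner e (ricTerm e R T) (fun X => knProd gf gf (X 0) (X 1) (X 2) (X 3)) = 0 :=
  tinner_ricTerm_eq_zero_of_tact he hR T (knProdMultilinear (innerₗ V) (innerₗ V)) fun A B =>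
    tact_knProd_eq_zero_of_skew (gf_wedgeOp_left A B) (gf_wedgeOp_left A B)

/-- for a Weyl tensor, `⟨Ric_{h⧆g}(W), g ⧆ g⟩ = 0`. -/
theorem stmt13 {n : ℕ} (e : OrthonormalBasis (Fin n) ℝ V)
    (h : V →ₗ[ℝ] V →ₗ[ℝ] ℝ) (hsym : ∀ X Y : V, h X Y = h Y X)
    (W : MultilinearMap ℝ (fun _ : Fin 4 => V) ℝ)
    (hA : ∀ x y z w : V, W ![x, y, z, w] = -W ![y, x, z, w])
    (hP : ∀ x y z w : V, W ![x, y, z, w] = W ![z, w, x, y])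
    (hB : ∀ x y z w : V,
      W ![x, y, z, w] + W ![y, z, x, w] + W ![z, x, y, w] = 0)
    (hRic : ∀ x z : V, (∑ a : Fin n, W ![x, e a, z, e a]) = 0) :
    tinner ⇑e (ricTerm ⇑e (knProd (fun X Y => h X Y) gf) ⇑W)
        (fun X : Fin 4 → V => knProd gf gf (X 0) (X 1) (X 2) (X 3)) = 0 :=
  stmt13_general e.orthonormal (knProd_swap _ _) W
end
end

section
/- For every n ≥ 4 there exist trace-free symmetric bilinear forms h_1, h_2 on an n-dimensional real inner product space V such that the Kulkarni–Nomizu product h_1 ⧆ h_2 is a nonzero Weyl tensor, i.e., h_1 ⧆ h_2 ≠ 0, it satisfies the first Bianchi identity, and its Ricci contraction vanishes. -/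
/-!
For vectors `u`, `v`, the symmetric form `u ⊙ v = u♭ ⊗ v♭ + v♭ ⊗ u♭` has trace `2⟪u, v⟫`. The Ricci
contraction of `h₁ ⧆ h₂` is `(tr h₂) h₁ + (tr h₁) h₂ - (h₁ ∘ h₂ + h₂ ∘ h₁)`, so it vanishes when
`h₁ = u ⊙ v` and `h₂ = w ⊙ z` for pairwise orthogonal `u, v, w, z`: the traces are zero, and so are
the compositions, since the forms live on orthogonal planes. For nonzero vectors,
`(h₁ ⧆ h₂)(u, w, v, z) = h₁(u, v) h₂(w, z) > 0`.
-/

open scoped RealInnerProductSpace BigOperators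
open Finset

noncomputable section

variable {V : Type*} [NormedAddCommGroup V] [InnerProductSpace ℝ V]

section KulkarniNomizu

variable {M : Type*}

theorem knProd_bianchi {s₁ s₂ : M → M → ℝ} (hs₁ : ∀ X Y, s₁ X Y = s₁ Y X)
    (hs₂ : ∀ X Y, s₂ X Y = s₂ Y X) (X Y Z W : M) :
    knProd s₁ s₂ X Y Z W + knProd s₁ s₂ Y Z X W + knProd s₁ s₂ Z X Y W = 0 := by
  simp only [knProd, hs₁ Y X, hs₁ Z X, hs₁ Z Y, hs₂ Y X, hs₂ Z X, hs₂ Z Y]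
  ring

theorem sum_knProd {ι : Type*} [Fintype ι] (s₁ s₂ : M → M → ℝ) (e : ι → M) (X Z : M) :
    ∑ a, knProd s₁ s₂ X (e a) Z (e a) =
      s₁ X Z * ∑ a, s₂ (e a) (e a) + (∑ a, s₁ (e a) (e a)) * s₂ X Z
        - (∑ a, s₁ X (e a) * s₂ (e a) Z + ∑ a, s₁ (e a) Z * s₂ X (e a)) := by
  simp only [knProd, mul_sum, sum_mul, sum_add_distrib, sum_sub_distrib]
  ring

end KulkarniNomizu

section SymmProd

/-- The symmetric product `u ⊙ v = u♭ ⊗ v♭ + v♭ ⊗ u♭` of the covectors dual to `u` and `v`,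
without the factor `1/2`. It provides symmetric forms whose traces and compositions are
determined by inner products of vectors. -/
def symmProd (u v : V) : V →ₗ[ℝ] V →ₗ[ℝ] ℝ :=
  LinearMap.BilinForm.linMulLin (innerₛₗ ℝ u) (innerₛₗ ℝ v) +
    LinearMap.BilinForm.linMulLin (innerₛₗ ℝ v) (innerₛₗ ℝ u)

theorem symmProd_apply (u v X Y : V) :
    symmProd u v X Y = ⟪u, X⟫ * ⟪v, Y⟫ + ⟪v, X⟫ * ⟪u, Y⟫ :=
  rfl

theorem symmProd_symm (u v X Y : V) : symmProd u v X Y = symmProd u v Y X := by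
  simp only [symmProd_apply]
  ring

theorem symmProd_apply_eq_zero {u v X : V} (hu : ⟪u, X⟫ = 0) (hv : ⟪v, X⟫ = 0) (Y : V) :
    symmProd u v X Y = 0 := by
  simp [symmProd_apply, hu, hv]

theorem symmProd_apply_self_pos {u v : V} (hu : u ≠ 0) (hv : v ≠ 0) : 0 < symmProd u v u v := by
  rw [symmProd_apply, real_inner_comm u v]
  have hu' : 0 < ⟪u, u⟫ := real_inner_self_pos.mpr hu
  have hv' : 0 < ⟪v, v⟫ := real_inner_self_pos.mpr hv
  exact add_pos_of_pos_of_nonneg (mul_pos hu' hv') (mul_self_nonneg _)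

variable {ι : Type*} [Fintype ι] (e : OrthonormalBasis ι ℝ V)

theorem sum_symmProd_mul (u v X : V) (f : V →ₗ[ℝ] ℝ) :
    ∑ a, symmProd u v X (e a) * f (e a) = ⟪u, X⟫ * f v + ⟪v, X⟫ * f u := by
  have expand (x : V) : ∑ a, ⟪x, e a⟫ * f (e a) = f x := by
    conv_rhs => rw [← e.sum_repr' x]
    simp [real_inner_comm]
  simp only [symmProd_apply, add_mul, mul_assoc, sum_add_distrib, ← mul_sum, expand]

theorem sum_symmProd_self (u v : V) : ∑ a, symmProd u v (e a) (e a) = 2 * ⟪u, v⟫ := by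
  have parseval (x y : V) : ∑ a, ⟪x, e a⟫ * ⟪y, e a⟫ = ⟪x, y⟫ := by
    simpa only [real_inner_comm] using e.sum_inner_mul_inner x y
  simp only [symmProd_apply, sum_add_distrib, parseval, real_inner_comm u v]
  ring

variable {u v w z : V}

theorem sum_symmProd_mul_symmProd_eq_zero (huw : ⟪u, w⟫ = 0) (huz : ⟪u, z⟫ = 0) (hvw : ⟪v, w⟫ = 0)
    (hvz : ⟪v, z⟫ = 0) (X Z : V) : ∑ a, symmProd u v X (e a) * symmProd w z (e a) Z = 0 := by
  rw [real_inner_comm] at huw huz hvw hvz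
  have contraction := sum_symmProd_mul e u v X (symmProd w z Z)
  simpa only [symmProd_symm w z Z, symmProd_apply_eq_zero huw huz, symmProd_apply_eq_zero hvw hvz,
    mul_zero, add_zero] using contraction

theorem sum_knProd_symmProd (huw : ⟪u, w⟫ = 0) (huz : ⟪u, z⟫ = 0) (hvw : ⟪v, w⟫ = 0)
    (hvz : ⟪v, z⟫ = 0) (X Z : V) :
    ∑ a, knProd (symmProd u v · ·) (symmProd w z · ·) X (e a) Z (e a) =
      symmProd u v X Z * (2 * ⟪w, z⟫) + 2 * ⟪u, v⟫ * symmProd w z X Z := by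
  have comp := sum_symmProd_mul_symmProd_eq_zero e huw huz hvw hvz X Z
  have comp_swap : ∑ a, symmProd u v (e a) Z * symmProd w z X (e a) = 0 := by
    simpa only [symmProd_symm u v Z, symmProd_symm w z _ X] using
      sum_symmProd_mul_symmProd_eq_zero e huw huz hvw hvz Z X
  rw [sum_knProd, comp, comp_swap, sum_symmProd_self, sum_symmProd_self, add_zero, sub_zero]

theorem knProd_symmProd_apply (huw : ⟪u, w⟫ = 0) (huz : ⟪u, z⟫ = 0) (hvw : ⟪v, w⟫ = 0)
    (hvz : ⟪v, z⟫ = 0) :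
    knProd (symmProd u v · ·) (symmProd w z · ·) u w v z =
      symmProd u v u v * symmProd w z w z := by
  have hwu : ⟪w, u⟫ = 0 := by rwa [real_inner_comm]
  have hzu : ⟪z, u⟫ = 0 := by rwa [real_inner_comm]
  simp only [knProd, symmProd_symm u v u z, symmProd_apply_eq_zero huz hvz,
    symmProd_apply_eq_zero huw hvw, symmProd_apply_eq_zero hwu hzu]
  ring

end SymmProd

/-- for `n ≥ 4` there are trace-free symmetric bilinear forms `h₁`, `h₂`
whose Kulkarni–Nomizu product is a nonzero Weyl tensor. -/
theorem stmt14 {n : ℕ} (hn : 4 ≤ n) (e : OrthonormalBasis (Fin n) ℝ V) :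
    ∃ h₁ h₂ : V →ₗ[ℝ] V →ₗ[ℝ] ℝ,
      (∀ X Y : V, h₁ X Y = h₁ Y X) ∧
      (∀ X Y : V, h₂ X Y = h₂ Y X) ∧
      (∑ a : Fin n, h₁ (e a) (e a)) = 0 ∧
      (∑ a : Fin n, h₂ (e a) (e a)) = 0 ∧
      (∃ X Y Z W : V, knProd (fun x y => h₁ x y) (fun x y => h₂ x y) X Y Z W ≠ 0) ∧
      (∀ X Y Z W : V,
        knProd (fun x y => h₁ x y) (fun x y => h₂ x y) X Y Z W +
          knProd (fun x y => h₁ x y) (fun x y => h₂ x y) Y Z X W +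
          knProd (fun x y => h₁ x y) (fun x y => h₂ x y) Z X Y W = 0) ∧
      (∀ X Z : V,
        (∑ a : Fin n, knProd (fun x y => h₁ x y) (fun x y => h₂ x y) X (e a) Z (e a)) = 0) := by
  have orth {i j : Fin n} (hij : i ≠ j) : ⟪e i, e j⟫ = 0 := e.orthonormal.2 hij
  have ne_zero (i : Fin n) : e i ≠ 0 := e.orthonormal.ne_zero i
  obtain ⟨i, j, k, l, hij, hik, hil, hjk, hjl, hkl⟩ :
      ∃ i j k l : Fin n, i ≠ j ∧ i ≠ k ∧ i ≠ l ∧ j ≠ k ∧ j ≠ l ∧ k ≠ l :=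
    ⟨⟨0, by lia⟩, ⟨1, by lia⟩, ⟨2, by lia⟩, ⟨3, by lia⟩, by simp⟩
  refine ⟨symmProd (e i) (e j), symmProd (e k) (e l), symmProd_symm _ _, symmProd_symm _ _,
    ?_, ?_, ⟨e i, e k, e j, e l, ?_⟩, knProd_bianchi (symmProd_symm _ _) (symmProd_symm _ _),
    fun X Z ↦ ?_⟩
  · rw [sum_symmProd_self, orth hij, mul_zero]
  · rw [sum_symmProd_self, orth hkl, mul_zero]
  · rw [knProd_symmProd_apply (orth hik) (orth hil) (orth hjk) (orth hjl)]
    exact (mul_pos (symmProd_apply_self_pos (ne_zero i) (ne_zero j))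
      (symmProd_apply_self_pos (ne_zero k) (ne_zero l))).ne'
  · rw [sum_knProd_symmProd e (orth hik) (orth hil) (orth hjk) (orth hjl), orth hij, orth hkl]
    ring
end
end
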